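/- There exists a constant C > 0 depending only on n such that, for every abstract Monge–Ampère pairing setup (W, B, 𝟙, F) as in the context and all φ₁, φ₂, φ₃ ∈ F: I(φ₁, φ₃) ≤ C · max{I(φ₁, φ₂), I(φ₂, φ₃)} (a quasi-triangle inequality for I). -/

import Mathlib

open Finset

/-- Abstract Monge–Ampère pairing setup with `n = m + 1`: a symmetric multilinear
form `B` on `W^(n+1) = W^(m+2)`, a unit element `one`, and a nonempty convex set
`F ⊆ W`, satisfying (i) normalization `B(𝟙, φ₁, …, φₙ) = 1`, (ii) integration by
parts `B(u, 𝟙, g₂, …, gₙ) = 0` for `u ∈ W₀` and `gᵢ ∈ W' = span (F ∪ {𝟙})`, and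
(iii) the Cauchy–Schwarz / local Hodge index inequality
`B(u, u, φ₁, …, φ_{n-1}) ≤ 0` for `u ∈ W₀`. -/
structure MASetup (m : ℕ) (W : Type*) [AddCommGroup W] [Module ℝ W] where
  B : MultilinearMap ℝ (fun _ : Fin (m + 2) => W) ℝ
  symm : ∀ (v : Fin (m + 2) → W) (σ : Equiv.Perm (Fin (m + 2))), B (v ∘ σ) = B v
  one : W
  F : Set W
  Fne : F.Nonempty
  Fconv : Convex ℝ F
  unital : ∀ g : Fin (m + 1) → W, (∀ i, g i ∈ F) → B (Fin.cons one g) = 1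
  parts : ∀ u ∈ Submodule.span ℝ ({x | ∃ φ ∈ F, ∃ ψ ∈ F, x = φ - ψ} ∪ {one}),
      ∀ g : Fin m → W, (∀ i, g i ∈ Submodule.span ℝ (F ∪ {one})) →
        B (Fin.cons u (Fin.cons one g)) = 0
  hodge : ∀ u ∈ Submodule.span ℝ ({x | ∃ φ ∈ F, ∃ ψ ∈ F, x = φ - ψ} ∪ {one}),
      ∀ g : Fin m → W, (∀ i, g i ∈ F) → B (Fin.cons u (Fin.cons u g)) ≤ 0

namespace MASetup

variable {m : ℕ} {W : Type*} [AddCommGroup W] [Module ℝ W]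

/-- The vector with `j` copies of `φ` followed by copies of `ψ`. -/
def mixVec (φ ψ : W) (j : ℕ) {k : ℕ} : Fin k → W := fun i => if (i : ℕ) < j then φ else ψ

/-- The linear span `W₀` of the differences of elements of `F` together with `one`. -/
def W0 (S : MASetup m W) : Submodule ℝ W :=
  Submodule.span ℝ ({x | ∃ φ ∈ S.F, ∃ ψ ∈ S.F, x = φ - ψ} ∪ {S.one})

/-- The Monge–Ampère energy
`E(φ, ψ) = (n+1)⁻¹ ∑_{j=0}^{n} B(φ-ψ, φ, …, φ, ψ, …, ψ)` with `j` copies of `φ`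
and `n - j` copies of `ψ` among the last `n` arguments. -/
noncomputable def energy (S : MASetup m W) (φ ψ : W) : ℝ :=
  ((m : ℝ) + 2)⁻¹ * ∑ j ∈ Finset.range (m + 2), S.B (Fin.cons (φ - ψ) (mixVec φ ψ j))

/-- The functional `I(φ, ψ) = B(φ-ψ, ψ, …, ψ) - B(φ-ψ, φ, …, φ)`. -/
noncomputable def Ifun (S : MASetup m W) (φ ψ : W) : ℝ :=
  S.B (Fin.cons (φ - ψ) fun _ => ψ) - S.B (Fin.cons (φ - ψ) fun _ => φ)

/-- The functional `J_ψ(φ) = B(φ-ψ, ψ, …, ψ) - E(φ, ψ)`. -/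
noncomputable def Jfun (S : MASetup m W) (ψ φ : W) : ℝ :=
  S.B (Fin.cons (φ - ψ) fun _ => ψ) - S.energy φ ψ

end MASetup


namespace MASetup

variable {m : ℕ} {W : Type*} [AddCommGroup W] [Module ℝ W]

/-- The form `-B(a, b, g)`. -/
noncomputable def QQ (S : MASetup m W) (a b : W) (g : Fin m → W) : ℝ :=
  - S.B (Fin.cons a (Fin.cons b g))

theorem B_cons_add (S : MASetup m W) (a b : W) (h : Fin (m + 1) → W) :
    S.B (Fin.cons (a + b) h) = S.B (Fin.cons a h) + S.B (Fin.cons b h) := by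
  have := S.B.map_update_add (Fin.cons a h) 0 a b
  simpa [Fin.update_cons_zero] using this

theorem B_cons_smul (S : MASetup m W) (t : ℝ) (a : W) (h : Fin (m + 1) → W) :
    S.B (Fin.cons (t • a) h) = t * S.B (Fin.cons a h) := by
  have := S.B.map_update_smul (Fin.cons a h) 0 t a
  simpa [Fin.update_cons_zero] using this

theorem B_update_sub (S : MASetup m W) (a x y : W) (h : Fin (m + 1) → W) (i : Fin (m + 1)) :
    S.B (Fin.cons a (Function.update h i (x - y))) =
      S.B (Fin.cons a (Function.update h i x)) - S.B (Fin.cons a (Function.update h i y)) := by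
  have := S.B.map_update_sub (Fin.cons a h) i.succ x y
  simpa [← Fin.cons_update] using this

theorem QQ_comm (S : MASetup m W) (a b : W) (g : Fin m → W) : S.QQ a b g = S.QQ b a g := by
  unfold QQ
  rw [← S.symm (Fin.cons a (Fin.cons b g)) (Equiv.swap 0 1)]
  congr 2
  funext j
  refine Fin.cases ?_ (fun j => ?_) j
  · simp only [Function.comp, Equiv.swap_apply_left]; rfl
  · refine Fin.cases ?_ (fun j => ?_) j
    · have : (Fin.succ 0 : Fin (m+2)) = 1 := rfl
      simp only [Function.comp, this, Equiv.swap_apply_right]; rfl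
    · have h0 : (j.succ.succ : Fin (m+2)) ≠ 0 := Fin.succ_ne_zero _
      have h1 : (j.succ.succ : Fin (m+2)) ≠ 1 := by
        intro h; rw [← Fin.succ_zero_eq_one, Fin.succ_inj] at h; exact Fin.succ_ne_zero _ h
      simp only [Function.comp, Equiv.swap_apply_of_ne_of_ne h0 h1]; rfl

theorem QQ_add_left (S : MASetup m W) (a b c : W) (g : Fin m → W) :
    S.QQ (a + b) c g = S.QQ a c g + S.QQ b c g := by
  unfold QQ; rw [B_cons_add]; ring

theorem QQ_smul_left (S : MASetup m W) (t : ℝ) (a c : W) (g : Fin m → W) :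
    S.QQ (t • a) c g = t * S.QQ a c g := by
  unfold QQ; rw [B_cons_smul]; ring

theorem QQ_add_right (S : MASetup m W) (a b c : W) (g : Fin m → W) :
    S.QQ c (a + b) g = S.QQ c a g + S.QQ c b g := by
  rw [QQ_comm, QQ_add_left, QQ_comm S a, QQ_comm S b]

theorem QQ_smul_right (S : MASetup m W) (t : ℝ) (a c : W) (g : Fin m → W) :
    S.QQ c (t • a) g = t * S.QQ c a g := by
  rw [QQ_comm, QQ_smul_left, QQ_comm S a]

theorem QQ_neg_neg (S : MASetup m W) (a b : W) (g : Fin m → W) :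
    S.QQ (-a) (-b) g = S.QQ a b g := by
  rw [← neg_one_smul ℝ a, ← neg_one_smul ℝ b, QQ_smul_left, QQ_smul_right]; ring

theorem QQ_update_sub (S : MASetup m W) (a b x y : W) (g : Fin m → W) (i : Fin m) :
    S.QQ a b (Function.update g i (x - y)) =
      S.QQ a b (Function.update g i x) - S.QQ a b (Function.update g i y) := by
  have := S.B_update_sub a x y (Fin.cons b g) i.succ
  simp only [← Fin.cons_update] at this
  unfold QQ; rw [this]; ring

theorem QQ_swap (S : MASetup m W) (a b c : W) (g : Fin m → W) (i : Fin m) :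
    S.QQ a b (Function.update g i c) = S.QQ a c (Function.update g i b) := by
  unfold QQ
  rw [← S.symm (Fin.cons a (Fin.cons b (Function.update g i c))) (Equiv.swap 1 i.succ.succ)]
  congr 2
  funext j
  by_cases hj1 : j = 1
  · subst hj1
    simp only [Function.comp, Equiv.swap_apply_left]
    exact Function.update_self i c g
  by_cases hj2 : j = i.succ.succ
  · subst hj2
    simp only [Function.comp, Equiv.swap_apply_right]
    exact (Function.update_self i b g).symm
  · simp only [Function.comp, Equiv.swap_apply_of_ne_of_ne hj1 hj2]
    revert hj1 hj2
    refine Fin.cases ?_ (fun j => ?_) j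
    · intros; rfl
    · refine Fin.cases ?_ (fun j => ?_) j
      · intro h; exact absurd rfl h
      · intro _ h
        have : j ≠ i := fun h' => h (by rw [h'])
        exact (Function.update_of_ne this c g).trans (Function.update_of_ne this b g).symm

theorem QQ_nonneg (S : MASetup m W) {u : W} (hu : u ∈ S.W0) {g : Fin m → W}
    (hg : ∀ i, g i ∈ S.F) : 0 ≤ S.QQ u u g := by
  have := S.hodge u hu g hg
  unfold QQ; linarith

theorem sub_mem_W0 (S : MASetup m W) {a b : W} (ha : a ∈ S.F) (hb : b ∈ S.F) :
    a - b ∈ S.W0 :=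
  Submodule.subset_span (Or.inl ⟨a, ha, b, hb, rfl⟩)

theorem QQ_cs (S : MASetup m W) {u v : W} (hu : u ∈ S.W0) (hv : v ∈ S.W0) {g : Fin m → W}
    (hg : ∀ i, g i ∈ S.F) {t : ℝ} (ht : 0 < t) :
    2 * |S.QQ u v g| ≤ t⁻¹ * S.QQ u u g + t * S.QQ v v g := by
  have key : ∀ s : ℝ, 0 ≤ S.QQ u u g + 2 * s * S.QQ u v g + s ^ 2 * S.QQ v v g := by
    intro s
    have := S.QQ_nonneg (S.W0.add_mem hu (S.W0.smul_mem s hv)) hg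
    rw [QQ_add_left, QQ_add_right, QQ_add_right, QQ_smul_left, QQ_smul_left, QQ_smul_right,
      QQ_smul_right, QQ_comm S v u] at this
    linarith
  have hk : ∀ s : ℝ, 0 ≤ t⁻¹ * (S.QQ u u g + 2 * s * S.QQ u v g + s ^ 2 * S.QQ v v g) :=
    fun s => mul_nonneg (by positivity) (key s)
  have h1 := hk t
  have h2 := hk (-t)
  have e1 : t⁻¹ * (S.QQ u u g + 2 * t * S.QQ u v g + t ^ 2 * S.QQ v v g) =
    t⁻¹ * S.QQ u u g + 2 * S.QQ u v g + t * S.QQ v v g := by field_simp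
  have e2 : t⁻¹ * (S.QQ u u g + 2 * (-t) * S.QQ u v g + (-t) ^ 2 * S.QQ v v g) =
    t⁻¹ * S.QQ u u g - 2 * S.QQ u v g + t * S.QQ v v g := by field_simp; ring
  rcases abs_cases (S.QQ u v g) with ⟨h, _⟩ | ⟨h, _⟩ <;> rw [h] <;> linarith

theorem B_step (S : MASetup m W) (a b : W) (h : Fin (m + 1) → W) (i : Fin (m + 1)) :
    S.B (Fin.cons (a - b) (Function.update h i b)) -
      S.B (Fin.cons (a - b) (Function.update h i a)) =
      S.QQ (a - b) (a - b) (i.removeNth h) := by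
  have h1 := S.B_update_sub (a - b) a b h i
  have h2 : S.B (Fin.cons (a - b) (Function.update h i (a - b))) =
      S.B (Fin.cons (a - b) (Fin.cons (a - b) (i.removeNth h))) := by
    rcases Fin.eq_zero_or_eq_succ i with rfl | ⟨k, rfl⟩
    · congr 2
      funext j
      refine Fin.cases ?_ (fun j => ?_) j <;> simp [Fin.tail]
    · rw [← S.symm (Fin.cons (a - b) (Fin.cons (a - b) (k.succ.removeNth h)))
        (Equiv.Perm.decomposeFin.symm (0, k.succ.cycleRange))]
      congr 1
      funext j
      refine Fin.cases ?_ (fun j => ?_) j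
      · simp
      · simp only [Fin.cons_succ, Function.comp, Equiv.Perm.decomposeFin_symm_apply_succ,
          Equiv.swap_self, Equiv.refl_apply]
        rw [← Fin.insertNth_removeNth]
        obtain ⟨l, rfl⟩ := (k.succ.cycleRange).symm.surjective j
        rw [Fin.insertNth_apply_cycleRange_symm]
        simp
  unfold QQ
  linarith

/-- Monotonicity along changes of arguments. -/
theorem B_mono (S : MASetup m W) {a b : W} (ha : a ∈ S.F) (hb : b ∈ S.F)
    (s : Finset (Fin (m + 1))) (h : Fin (m + 1) → W) (hh : ∀ i, h i = a ∨ h i = b) :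
    S.B (Fin.cons (a - b) (s.piecewise (fun _ => a) h)) ≤ S.B (Fin.cons (a - b) h) ∧
    S.B (Fin.cons (a - b) h) ≤ S.B (Fin.cons (a - b) (s.piecewise (fun _ => b) h)) := by
  have hmem : ∀ x : W, x = a ∨ x = b → x ∈ S.F := by rintro x (rfl | rfl) <;> assumption
  have step : ∀ (h' : Fin (m + 1) → W) (i : Fin (m + 1)), (∀ i, h' i = a ∨ h' i = b) →
      S.B (Fin.cons (a - b) (Function.update h' i a)) ≤ S.B (Fin.cons (a - b) h') ∧
      S.B (Fin.cons (a - b) h') ≤ S.B (Fin.cons (a - b) (Function.update h' i b)) := by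
    intro h' i hh'
    have h1 := S.B_step a b h' i
    have h2 := S.QQ_nonneg (S.sub_mem_W0 ha hb) (g := i.removeNth h')
      (fun j => hmem _ (hh' _))
    rcases hh' i with e | e
    · have : Function.update h' i a = h' := by rw [← e]; exact Function.update_eq_self i h'
      rw [this] at h1 ⊢
      constructor <;> linarith
    · have : Function.update h' i b = h' := by rw [← e]; exact Function.update_eq_self i h'
      rw [this] at h1 ⊢
      constructor <;> linarith
  induction s using Finset.induction_on with
  | empty => simp
  | insert i s hi ih =>
    rw [Finset.piecewise_insert, Finset.piecewise_insert]
    have h1 := (step (s.piecewise (fun _ => a) h) i (fun j => by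
      by_cases hj : j ∈ s
      · left; simp [hj]
      · simpa [hj] using hh j)).1
    have h2 := (step (s.piecewise (fun _ => b) h) i (fun j => by
      by_cases hj : j ∈ s
      · right; simp [hj]
      · simpa [hj] using hh j)).2
    exact ⟨h1.trans ih.1, ih.2.trans h2⟩

theorem QQ_le_Ifun (S : MASetup m W) {a b : W} (ha : a ∈ S.F) (hb : b ∈ S.F)
    (g : Fin m → W) (hg : ∀ i, g i = a ∨ g i = b) :
    S.QQ (a - b) (a - b) g ≤ S.Ifun a b := by
  have h1 := S.B_step a b (Fin.cons a g) 0
  simp only [Fin.update_cons_zero] at h1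
  have e : (0 : Fin (m + 1)).removeNth (Fin.cons a g : Fin (m + 1) → W) = g := by
    funext j; simp [Fin.removeNth]
  rw [e] at h1
  have h2 := (S.B_mono ha hb Finset.univ (Fin.cons a g)
    (fun i => by refine Fin.cases ?_ (fun i => ?_) i <;> simp [hg])).1
  have h3 := (S.B_mono ha hb Finset.univ (Fin.cons b g)
    (fun i => by refine Fin.cases ?_ (fun i => ?_) i <;> simp [hg])).2
  rw [Finset.piecewise_univ] at h2 h3
  unfold Ifun
  linarith

theorem Ifun_le (S : MASetup m W) {a b : W} {T : ℝ}
    (hT : ∀ g : Fin m → W, (∀ i, g i = a ∨ g i = b) → S.QQ (a - b) (a - b) g ≤ T) :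
    S.Ifun a b ≤ ((m : ℝ) + 1) * T := by
  have key : ∀ s : Finset (Fin (m + 1)), S.B (Fin.cons (a - b) fun _ => b) -
      S.B (Fin.cons (a - b) (s.piecewise (fun _ => a) (fun _ => b))) ≤ s.card * T := by
    intro s
    induction s using Finset.induction_on with
    | empty => simp
    | insert i s hi ih =>
      rw [Finset.piecewise_insert, Finset.card_insert_of_notMem hi]
      have hp : ∀ j, s.piecewise (fun _ => a) (fun _ => b) j = a ∨
          s.piecewise (fun _ => a) (fun _ => b) j = b := fun j => by
        by_cases hj : j ∈ s <;> simp [hj]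
      have h1 := S.B_step a b (s.piecewise (fun _ => a) (fun _ => b)) i
      have h2 := hT (i.removeNth (s.piecewise (fun _ => a) (fun _ => b))) (fun j => hp _)
      have e : Function.update (s.piecewise (fun _ => a) (fun _ => b)) i b =
          s.piecewise (fun _ => a) (fun _ => b) := by
        apply Function.update_eq_self_iff.2; simp [hi]
      rw [e] at h1
      push_cast
      linarith
  have := key Finset.univ
  rw [Finset.piecewise_univ] at this
  simpa [Ifun] using this

end MASetup

open MASetup in
theorem QQ_iter.{u} (m : ℕ) (s : Finset (Fin m)) : ∀ ε : ℝ, 0 < ε → ∃ C : ℝ, 0 < C ∧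
    ∀ (W : Type u) [AddCommGroup W] [Module ℝ W] (S : MASetup m W),
      ∀ a ∈ S.F, ∀ b ∈ S.F, ∀ c ∈ S.F, ∀ T : ℝ,
      (∀ g : Fin m → W, (∀ i, g i = a ∨ g i = b ∨ g i = c) →
        S.QQ (b - c) (b - c) g ≤ T) →
      ∀ g : Fin m → W, (∀ i, g i = a ∨ g i = b ∨ g i = c) →
        (∀ i, i ∉ s → g i = a ∨ g i = b) →
        S.QQ (a - b) (a - b) g ≤ C * S.Ifun a b + ε * T := by
  induction s using Finset.induction_on with
  | empty =>
    intro ε hε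
    refine ⟨1, one_pos, ?_⟩
    intro W _ _ S a ha b hb c hc T hT g hg hs
    have hT0 : 0 ≤ T := (S.QQ_nonneg (S.sub_mem_W0 hb hc) (g := fun _ => a)
      (fun _ => ha)).trans (hT _ (fun _ => Or.inl rfl))
    have := S.QQ_le_Ifun ha hb g (fun i => hs i (by simp))
    have : 0 ≤ ε * T := by positivity
    linarith
  | insert i s hi ih =>
    intro ε hε
    obtain ⟨C, hC, H⟩ := ih (ε / 2 / (1 + 2 / ε)) (by positivity)
    refine ⟨(1 + 2 / ε) * C, by positivity, ?_⟩
    intro W _ _ S a ha b hb c hc T hT g hg hs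
    have hmem : ∀ x : W, x = a ∨ x = b ∨ x = c → x ∈ S.F := by
      rintro x (rfl | rfl | rfl) <;> assumption
    have hT0 : 0 ≤ T := (S.QQ_nonneg (S.sub_mem_W0 hb hc) (g := fun _ => a)
      (fun _ => ha)).trans (hT _ (fun _ => Or.inl rfl))
    have hupd : ∀ x : W, x = a ∨ x = b →
        (∀ j, Function.update g i x j = a ∨ Function.update g i x j = b ∨
          Function.update g i x j = c) ∧
        (∀ j, j ∉ s → Function.update g i x j = a ∨ Function.update g i x j = b) := by
      intro x hx
      constructor
      · intro j
        by_cases hj : j = i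
        · subst hj; simp only [Function.update_self]; tauto
        · simpa [hj] using hg j
      · intro j hjs
        by_cases hj : j = i
        · subst hj; simpa using hx
        · simpa [hj] using hs j (by simp [hj, hjs])
    set A := C * S.Ifun a b + ε / 2 / (1 + 2 / ε) * T with hA
    have hb1 : ∀ x : W, x = a ∨ x = b →
        S.QQ (a - b) (a - b) (Function.update g i x) ≤ A := fun x hx =>
      H W S a ha b hb c hc T hT _ (hupd x hx).1 (hupd x hx).2
    have hA0 : 0 ≤ A := (S.QQ_nonneg (S.sub_mem_W0 ha hb)
      (fun j => hmem _ ((hupd a (Or.inl rfl)).1 j))).trans (hb1 a (Or.inl rfl))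
    have hcs : ∀ x : W, x = a ∨ x = b →
        2 * |S.QQ (a - b) (b - c) (Function.update g i x)| ≤ 2 / ε * A + ε / 2 * T := by
      intro x hx
      have h1 := S.QQ_cs (S.sub_mem_W0 ha hb) (S.sub_mem_W0 hb hc)
        (fun j => hmem _ ((hupd x hx).1 j)) (t := ε / 2) (by positivity)
      have h2 : (ε / 2)⁻¹ * S.QQ (a - b) (a - b) (Function.update g i x) ≤ (ε / 2)⁻¹ * A :=
        mul_le_mul_of_nonneg_left (hb1 x hx) (by positivity)
      have h3 : (ε / 2) * S.QQ (b - c) (b - c) (Function.update g i x) ≤ (ε / 2) * T :=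
        mul_le_mul_of_nonneg_left (hT _ (hupd x hx).1) (by positivity)
      rw [inv_div] at h1 h2
      linarith
    have hfin : (1 + 2 / ε) * C * S.Ifun a b + ε * T =
        (1 + 2 / ε) * A + ε / 2 * T := by
      rw [hA]
      have : (1 + 2 / ε) ≠ 0 := by positivity
      have e : (1 + 2 / ε) * (ε / 2 / (1 + 2 / ε) * T) = ε / 2 * T := by
        rw [← mul_assoc, mul_div_cancel₀ _ this]
      rw [mul_add, e]; ring
    rw [hfin]
    have hn : 0 ≤ 2 / ε * A := by positivity
    have hn' : 0 ≤ ε / 2 * T := by positivity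
    by_cases hgi : g i = a ∨ g i = b
    · have := hb1 (g i) hgi
      rw [Function.update_eq_self] at this
      linarith
    · have hgc : g i = c := by have := hg i; tauto
      have e1 := S.QQ_update_sub (a - b) (a - b) b c g i
      have e0 : Function.update g i c = g := by rw [← hgc]; exact Function.update_eq_self i g
      rw [e0, S.QQ_swap, S.QQ_update_sub] at e1
      have h1 := hcs a (Or.inl rfl)
      have h2 := hcs b (Or.inr rfl)
      have h3 := hb1 b (Or.inr rfl)
      have h4 := neg_abs_le (S.QQ (a - b) (b - c) (Function.update g i a))
      have h5 := le_abs_self (S.QQ (a - b) (b - c) (Function.update g i b))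
      linarith

/-- quasi-triangle inequality for `I`: there is `C > 0` depending
only on `n = m + 1` such that `I(φ₁, φ₃) ≤ C max{I(φ₁, φ₂), I(φ₂, φ₃)}`. -/
theorem Ifun_quasi_triangle (m : ℕ) :
    ∃ C : ℝ, 0 < C ∧
      ∀ (W : Type*) [AddCommGroup W] [Module ℝ W] (S : MASetup m W),
        ∀ φ₁ ∈ S.F, ∀ φ₂ ∈ S.F, ∀ φ₃ ∈ S.F,
          S.Ifun φ₁ φ₃ ≤ C * max (S.Ifun φ₁ φ₂) (S.Ifun φ₂ φ₃) := by
  obtain ⟨C, hC, H⟩ := QQ_iter m Finset.univ (1 / 2) (by norm_num)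
  refine ⟨((m : ℝ) + 1) * (8 * C), by positivity, ?_⟩
  intro W _ _ S a ha b hb c hc
  set M := max (S.Ifun a b) (S.Ifun b c) with hM
  have hmem : ∀ x : W, x = a ∨ x = b ∨ x = c → x ∈ S.F := by
    rintro x (rfl | rfl | rfl) <;> assumption
  have hfin : {g : Fin m → W | ∀ i, g i = a ∨ g i = b ∨ g i = c}.Finite := by
    have := Set.Finite.pi' (fun _ : Fin m => Set.toFinite ({a, b, c} : Set W))
    simpa using this
  obtain ⟨g0, hg0, hmax⟩ := Set.exists_max_image _
    (fun g => max (S.QQ (a - b) (a - b) g) (S.QQ (b - c) (b - c) g)) hfin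
    ⟨fun _ => a, fun _ => Or.inl rfl⟩
  set T := max (S.QQ (a - b) (a - b) g0) (S.QQ (b - c) (b - c) g0) with hT
  have hTu : ∀ g : Fin m → W, (∀ i, g i = a ∨ g i = b ∨ g i = c) →
      S.QQ (a - b) (a - b) g ≤ T := fun g hg => (le_max_left _ _).trans (hmax g hg)
  have hTv : ∀ g : Fin m → W, (∀ i, g i = a ∨ g i = b ∨ g i = c) →
      S.QQ (b - c) (b - c) g ≤ T := fun g hg => (le_max_right _ _).trans (hmax g hg)
  have h1 := H W S a ha b hb c hc T hTv g0 hg0 (fun i hi => absurd (Finset.mem_univ i) hi)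
  have h2 := H W S c hc b hb a ha T (fun g hg => by
      rw [← neg_sub a b, S.QQ_neg_neg]
      exact hTu g (fun i => by have := hg i; tauto)) g0
      (fun i => by have := hg0 i; tauto) (fun i hi => absurd (Finset.mem_univ i) hi)
  rw [← neg_sub b c, S.QQ_neg_neg] at h2
  have hsymm : S.Ifun c b = S.Ifun b c := by
    unfold MASetup.Ifun
    rw [← neg_sub b c, ← neg_one_smul ℝ (b - c), S.B_cons_smul, S.B_cons_smul]; ring
  rw [hsymm] at h2
  have hTM : T ≤ 2 * C * M := by
    have i1 : C * S.Ifun a b ≤ C * M := mul_le_mul_of_nonneg_left (le_max_left _ _) hC.le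
    have i2 : C * S.Ifun b c ≤ C * M := mul_le_mul_of_nonneg_left (le_max_right _ _) hC.le
    have : T ≤ C * M + 1 / 2 * T := by
      conv_lhs => rw [hT]
      exact max_le (by linarith) (by linarith)
    linarith
  have hI := S.Ifun_le (a := a) (b := c) (T := 4 * T) (fun g hg => by
    have hg' : ∀ i, g i = a ∨ g i = b ∨ g i = c := fun i => by have := hg i; tauto
    have hcs := S.QQ_cs (S.sub_mem_W0 ha hb) (S.sub_mem_W0 hb hc)
      (fun i => hmem _ (hg' i)) one_pos
    have e : a - c = (a - b) + (b - c) := by abel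
    rw [e, S.QQ_add_left, S.QQ_add_right, S.QQ_add_right, S.QQ_comm (b - c) (a - b)]
    have := hTu g hg'
    have := hTv g hg'
    have := le_abs_self (S.QQ (a - b) (b - c) g)
    linarith)
  calc S.Ifun a c ≤ ((m : ℝ) + 1) * (4 * T) := hI
    _ ≤ ((m : ℝ) + 1) * (4 * (2 * C * M)) := by gcongr
    _ = _ := by ring
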